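/- arXiv:1912.07345 — 4 statements merged into one kernel-verified Lean document; each statement's English description precedes it below -/
import Mathlib

section
/- For every Λ ≥ 1 there exist constants c > 0, Λ' > 0 and ν₀ ∈ (0,1), depending only on Λ, with the following property: if ν ∈ (0, ν₀] and Q : [0,∞) → (0,∞) is a differentiable function satisfying Q'(t) ≤ Λ ( Q(t)(1 + log(1 + 1/Q(t))) + ν ) for all t ≥ 0, together with the smallness condition Q(0)(1 + log(1 + 1/Q(0))) < ν, then Q(t) ≤ Λ' ( Q(0) + ν t ) for all t ∈ [0, c/log(1/ν)]. -/
open Real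

lemma aux_log_bound (r ν x K : ℝ) (hr : 0 < r) (hr1 : r ≤ 1) (hν : 0 < ν) (hK : 1 ≤ K)
    (hL : 1 ≤ Real.log (1 / ν)) (hx : 0 < x) (hxc : x ≤ r ^ 2 / Real.log (1 / ν)) :
    x * (1 + Real.log (1 + 1 / (K * ν * x))) ≤ 5 * r := by
  have hxL : x * Real.log (1 / ν) ≤ r ^ 2 := (le_div_iff₀ (by linarith)).1 hxc
  have hxr : x ≤ r ^ 2 := by nlinarith
  have hν1 : ν ≤ 1 := by
    by_contra h
    push Not at h
    have : Real.log (1 / ν) ≤ 0 := by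
      rw [one_div, Real.log_inv]
      have := Real.log_pos h
      linarith
    linarith
  have hx1 : x ≤ 1 := by nlinarith
  have hνx : 0 < ν * x := by positivity
  have hνx1 : ν * x ≤ 1 := by nlinarith
  obtain ⟨y, hy, hyx⟩ : ∃ y : ℝ, 0 < y ∧ x = y ^ 2 :=
    ⟨√x, Real.sqrt_pos.2 hx, (Real.sq_sqrt hx.le).symm⟩
  have hyr : y ≤ r := by
    rw [hyx] at hxr
    exact (pow_le_pow_iff_left₀ hy.le hr.le (by norm_num)).1 hxr
  have h1 : 1 + 1 / (K * ν * x) ≤ 2 * (1 / ν) * (1 / y) ^ 2 := by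
    have e : 2 * (1 / ν) * (1 / y) ^ 2 = 1 / (ν * x) + 1 / (ν * x) := by
      rw [hyx]; field_simp; norm_num
    rw [e]
    have a1 : 1 ≤ 1 / (ν * x) := by rw [le_div_iff₀ hνx]; linarith
    have a2 : 1 / (K * ν * x) ≤ 1 / (ν * x) := by
      apply one_div_le_one_div_of_le hνx
      nlinarith
    linarith
  have h2 : Real.log (1 + 1 / (K * ν * x)) ≤
      Real.log 2 + Real.log (1 / ν) + 2 * Real.log (1 / y) := by
    have hK0 : 0 < K := by linarith
    refine (Real.log_le_log (by positivity) h1).trans (le_of_eq ?_)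
    rw [Real.log_mul (by positivity) (by positivity), Real.log_mul (by positivity) (by positivity),
      Real.log_pow]
    norm_num
  have h3 : Real.log 2 ≤ 1 := by
    have := Real.log_le_sub_one_of_pos (show (0:ℝ) < 2 by norm_num)
    linarith
  have h4 : Real.log (1 / y) ≤ 1 / y - 1 := Real.log_le_sub_one_of_pos (by positivity)
  have h5 : x * Real.log (1 / y) ≤ y - x := by
    have := mul_le_mul_of_nonneg_left h4 hx.le
    have e : x * (1 / y - 1) = y - x := by rw [hyx]; field_simp
    linarith
  have h6 := mul_le_mul_of_nonneg_left h2 hx.le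
  have h7 := mul_le_mul_of_nonneg_left h3 hx.le
  nlinarith

/-- **Lemma 2, short-time part**: if a positive differentiable `Q` satisfies
`Q' ≤ Λ(Q(1 + log(1 + 1/Q)) + ν)` and `Q(0)(1 + log(1 + 1/Q(0))) < ν`, then
`Q(t) ≤ Λ'(Q(0) + νt)` for all times `t ≤ c/log(1/ν)`. -/
theorem Q_bound_short_time (Λ : ℝ) (hΛ : 1 ≤ Λ) :
    ∃ c > (0 : ℝ), ∃ Λ' > (0 : ℝ), ∃ ν₀ : ℝ, 0 < ν₀ ∧ ν₀ < 1 ∧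
      ∀ ν : ℝ, 0 < ν → ν ≤ ν₀ → ∀ Q : ℝ → ℝ,
        (∀ t ≥ (0 : ℝ), 0 < Q t) →
        (∀ t ≥ (0 : ℝ), DifferentiableAt ℝ Q t) →
        (∀ t ≥ (0 : ℝ), deriv Q t ≤ Λ * (Q t * (1 + Real.log (1 + 1 / Q t)) + ν)) →
        Q 0 * (1 + Real.log (1 + 1 / Q 0)) < ν →
        ∀ t : ℝ, 0 ≤ t → t ≤ c / Real.log (1 / ν) → Q t ≤ Λ' * (Q 0 + ν * t) := by
  have hr : 0 < 1 / (20 * Λ) := by positivity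
  have hr1 : 1 / (20 * Λ) ≤ 1 := by rw [div_le_one (by positivity)]; linarith
  have hrΛ : Λ * (5 * (1 / (20 * Λ))) = 1 / 4 := by field_simp; norm_num
  refine ⟨(1 / (20 * Λ)) ^ 2, by positivity, 4 * Λ, by positivity, Real.exp (-1), Real.exp_pos _,
    by rw [Real.exp_lt_one_iff]; norm_num, ?_⟩
  generalize 1 / (20 * Λ) = r at *
  intro ν hν hν0 Q hQ hd hQ' h0 t ht htc
  have hL : 1 ≤ Real.log (1 / ν) := by
    have := Real.log_le_log hν hν0
    rw [Real.log_exp] at this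
    rw [one_div, Real.log_inv]
    linarith
  have hQ0 := hQ 0 le_rfl
  have key : Q t ≤ Q 0 + 4 * Λ * ν * t := by
    refine image_le_of_deriv_right_lt_deriv_boundary' (f := Q) (f' := deriv Q) (a := 0) (b := t)
      (B := fun x => Q 0 + 4 * Λ * ν * x) (B' := fun _ => 4 * Λ * ν) ?_ ?_ ?_ ?_ ?_ ?_
      (Set.right_mem_Icc.2 ht)
    · exact fun x hx => (hd x hx.1).continuousAt.continuousWithinAt
    · exact fun x hx => (hd x hx.1).hasDerivAt.hasDerivWithinAt
    · simp
    · fun_prop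
    · intro x _
      have := ((hasDerivAt_id x).const_mul (4 * Λ * ν)).const_add (Q 0)
      simpa using this.hasDerivWithinAt
    · intro x hx hxe
      have hx0 := hx.1
      refine (hQ' x hx0).trans_lt ?_
      have hQx := hQ x hx0
      rcases hx0.eq_or_lt with h | hxpos
      · subst h
        nlinarith [mul_pos (show 0 < Λ by linarith) hν]
      · have hb := aux_log_bound r ν x (4 * Λ) hr hr1 hν (by linarith) hL hxpos
          (hx.2.le.trans htc)
        have hbp : 0 < 4 * Λ * ν * x := by positivity
        have l1 : Real.log (1 + 1 / Q x) ≤ Real.log (1 + 1 / Q 0) := by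
          apply Real.log_le_log (by positivity)
          have := one_div_le_one_div_of_le hQ0 (show Q 0 ≤ Q x by linarith)
          linarith
        have l2 : Real.log (1 + 1 / Q x) ≤ Real.log (1 + 1 / (4 * Λ * ν * x)) := by
          apply Real.log_le_log (by positivity)
          have := one_div_le_one_div_of_le hbp (show 4 * Λ * ν * x ≤ Q x by linarith)
          linarith
        have m1 := mul_le_mul_of_nonneg_left l1 hQ0.le
        have m2 := mul_le_mul_of_nonneg_left l2 hbp.le
        have s1 : Q x * (1 + Real.log (1 + 1 / Q x)) ≤ ν + 4 * Λ * ν *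
            (x * (1 + Real.log (1 + 1 / (4 * Λ * ν * x)))) := by
          have e : Q x * (1 + Real.log (1 + 1 / Q x)) = Q 0 + 4 * Λ * ν * x +
            (Q 0 * Real.log (1 + 1 / Q x) + 4 * Λ * ν * x * Real.log (1 + 1 / Q x)) := by
            generalize Real.log (1 + 1 / Q x) = l
            rw [hxe]; ring
          rw [e]
          linarith
        have s2 := mul_le_mul_of_nonneg_left hb (show 0 ≤ 4 * Λ * ν by positivity)
        have s3 : 4 * Λ * ν * (5 * r) = ν := by
          linear_combination 4 * ν * hrΛ
        have s4 : Q x * (1 + Real.log (1 + 1 / Q x)) + ν ≤ 3 * ν := by linarith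
        have s5 := mul_le_mul_of_nonneg_left s4 (show 0 ≤ Λ by linarith)
        have : 0 < Λ * ν := by positivity
        linarith
  nlinarith [mul_nonneg hν.le ht]
end

section
/- Let η be a finite nonnegative measure on ℝ² × ℝ² with total mass M > 0, and suppose Q := ∬ |x − y|² dη(x,y) is finite and positive. Then ∬ |x − y|² log(1 + 1/|x − y|) dη(x,y) ≤ Q · log( 1 + √(M/Q) ). -/
open MeasureTheory Real
open scoped ENNReal

noncomputable section

abbrev E2 : Type := EuclideanSpace ℝ (Fin 2)

theorem log_moment_pointwise (a r : ℝ) (ha : 0 < a) (hr : 0 ≤ r) :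
    r ^ 2 * Real.log (1 + 1 / r)
      ≤ (Real.log (1 + a) - a / (2 * (1 + a))) * r ^ 2 + 1 / (a * (2 * (1 + a))) := by
  rcases hr.eq_or_lt with h | h
  · rw [← h]
    have : 0 < 1 / (a * (2 * (1 + a))) := by positivity
    simpa using this.le
  · have h1 : Real.log ((1 + 1 / r) / (1 + a)) ≤ (1 + 1 / r) / (1 + a) - 1 :=
      Real.log_le_sub_one_of_pos (by positivity)
    rw [Real.log_div (by positivity) (by positivity)] at h1
    have h2 : r ^ 2 * Real.log (1 + 1 / r)
        ≤ r ^ 2 * (Real.log (1 + a) + ((1 + 1 / r) / (1 + a) - 1)) :=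
      mul_le_mul_of_nonneg_left (by linarith) (by positivity)
    have h3 : (Real.log (1 + a) - a / (2 * (1 + a))) * r ^ 2 + 1 / (a * (2 * (1 + a)))
        - r ^ 2 * (Real.log (1 + a) + ((1 + 1 / r) / (1 + a) - 1))
        = (a * r - 1) ^ 2 / (a * (2 * (1 + a))) := by
      field_simp
      ring
    have h4 : 0 ≤ (a * r - 1) ^ 2 / (a * (2 * (1 + a))) := by positivity
    linarith

/-- **Jensen-type estimate for the logarithmic moment**: if `η` is a finite nonnegative
measure on `ℝ² × ℝ²` of total mass `M > 0` with finite positive quadratic cost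
`Q = ∬ |x−y|² dη`, then `∬ |x−y|² log(1 + 1/|x−y|) dη ≤ Q log(1 + √(M/Q))`. -/
theorem log_moment_jensen (η : Measure (E2 × E2)) (M Q : ℝ)
    (hmass : η Set.univ = ENNReal.ofReal M) (hM : 0 < M)
    (hQint : Integrable (fun p : E2 × E2 => ‖p.1 - p.2‖ ^ 2) η)
    (hQ : Q = ∫ p : E2 × E2, ‖p.1 - p.2‖ ^ 2 ∂η) (hQpos : 0 < Q)
    (hlogint : Integrable
      (fun p : E2 × E2 => ‖p.1 - p.2‖ ^ 2 * Real.log (1 + 1 / ‖p.1 - p.2‖)) η) :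
    ∫ p : E2 × E2, ‖p.1 - p.2‖ ^ 2 * Real.log (1 + 1 / ‖p.1 - p.2‖) ∂η
      ≤ Q * Real.log (1 + Real.sqrt (M / Q)) := by
  have hfin : IsFiniteMeasure η := ⟨by rw [hmass]; exact ENNReal.ofReal_lt_top⟩
  have hreal : η.real Set.univ = M := by
    rw [Measure.real, hmass, ENNReal.toReal_ofReal hM.le]
  set a := Real.sqrt (M / Q) with ha_def
  have ha : 0 < a := Real.sqrt_pos.mpr (by positivity)
  have ha2 : M = a ^ 2 * Q := by
    rw [ha_def, Real.sq_sqrt (by positivity)]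
    field_simp
  have hle := integral_mono hlogint
    ((hQint.const_mul (Real.log (1 + a) - a / (2 * (1 + a)))).add
      (integrable_const (1 / (a * (2 * (1 + a))))))
    (fun p => log_moment_pointwise a ‖p.1 - p.2‖ ha (norm_nonneg _))
  refine hle.trans (le_of_eq ?_)
  simp only [Pi.add_apply]
  rw [integral_add (hQint.const_mul _) (integrable_const _), integral_const_mul, ← hQ,
    integral_const, hreal, smul_eq_mul, ha2]
  field_simp
  ring
end
end

section
/- Let v : ℝ² → ℝ² satisfy the log-Lipschitz estimate |v(x) − v(y)| ≤ C₀ |x − y| (1 + log(1 + 1/|x − y|)) for all x, y ∈ ℝ², and let η be a finite nonnegative measure on ℝ² × ℝ² with total mass M > 0 such that Q := ∬ |x − y|² dη(x,y) is finite and positive. Then | ∬ (x − y) · ( v(x) − v(y) ) dη(x,y) | ≤ C₀ Q ( 1 + log(1 + √(M/Q)) ). -/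
open MeasureTheory Real
open scoped ENNReal RealInnerProductSpace

noncomputable section

lemma aux_pt (r a : ℝ) (hr : 0 ≤ r) (ha : 0 < a) :
    r ^ 2 * (1 + Real.log (1 + 1 / r)) ≤
      r ^ 2 * (1 + Real.log (1 + a)) + (1 / (2 * a * (1 + a))) * (1 - a ^ 2 * r ^ 2) := by
  rcases hr.eq_or_lt with h | h
  · subst h
    simp
    positivity
  · have h1 : Real.log (1 + 1 / r) - Real.log (1 + a) ≤ (1 + 1 / r) / (1 + a) - 1 := by
      rw [← Real.log_div (by positivity) (by positivity)]
      exact Real.log_le_sub_one_of_pos (by positivity)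
    have h2 : (1 + 1 / r) / (1 + a) - 1 ≤ ((1 / r) ^ 2 - a ^ 2) / (2 * a * (1 + a)) := by
      have : ((1 / r) ^ 2 - a ^ 2) / (2 * a * (1 + a)) - ((1 + 1 / r) / (1 + a) - 1)
          = (1 / r - a) ^ 2 / (2 * a * (1 + a)) := by
        field_simp
        ring
      have h3 : 0 ≤ (1 / r - a) ^ 2 / (2 * a * (1 + a)) := by positivity
      linarith
    have h4 := mul_le_mul_of_nonneg_left (h1.trans h2) (sq_nonneg r)
    have h5 : r ^ 2 * (((1 / r) ^ 2 - a ^ 2) / (2 * a * (1 + a)))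
        = (1 / (2 * a * (1 + a))) * (1 - a ^ 2 * r ^ 2) := by
      field_simp
    linarith

/-- **Estimate of the term `I¹`**: if `v` is log-Lipschitz with constant `C₀` and `η` is a
finite nonnegative measure on `ℝ² × ℝ²` of total mass `M > 0` with finite positive quadratic
cost `Q`, then `|∬ (x−y)·(v(x)−v(y)) dη| ≤ C₀ Q (1 + log(1 + √(M/Q)))`. -/
theorem logLipschitz_term_estimate (v : E2 → E2) (C₀ : ℝ)
    (hv : ∀ x y : E2, ‖v x - v y‖ ≤ C₀ * ‖x - y‖ * (1 + Real.log (1 + 1 / ‖x - y‖)))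
    (η : Measure (E2 × E2)) (M Q : ℝ)
    (hmass : η Set.univ = ENNReal.ofReal M) (hM : 0 < M)
    (hQint : Integrable (fun p : E2 × E2 => ‖p.1 - p.2‖ ^ 2) η)
    (hQ : Q = ∫ p : E2 × E2, ‖p.1 - p.2‖ ^ 2 ∂η) (hQpos : 0 < Q)
    (hint : Integrable (fun p : E2 × E2 => (⟪p.1 - p.2, v p.1 - v p.2⟫ : ℝ)) η) :
    |∫ p : E2 × E2, (⟪p.1 - p.2, v p.1 - v p.2⟫ : ℝ) ∂η|
      ≤ C₀ * Q * (1 + Real.log (1 + Real.sqrt (M / Q))) := by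
  have hC : 0 ≤ C₀ := by
    have h := hv (EuclideanSpace.single 0 1) 0
    have h1 : ‖(EuclideanSpace.single 0 1 : E2) - 0‖ = 1 := by simp
    rw [h1] at h
    have h2 : 0 < Real.log (1 + 1 / 1) := Real.log_pos (by norm_num)
    have h3 := (norm_nonneg _).trans h
    by_contra hc
    push Not at hc
    nlinarith
  haveI : IsFiniteMeasure η := ⟨by rw [hmass]; exact ENNReal.ofReal_lt_top⟩
  have hreal : η.real Set.univ = M := by
    rw [Measure.real, hmass, ENNReal.toReal_ofReal hM.le]
  set a := Real.sqrt (M / Q) with ha_def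
  have ha : 0 < a := Real.sqrt_pos.mpr (by positivity)
  have ha2 : a ^ 2 = M / Q := Real.sq_sqrt (by positivity)
  set c := 1 / (2 * a * (1 + a)) with hc
  have i1 : Integrable (fun p : E2 × E2 => ‖p.1 - p.2‖ ^ 2 * (1 + Real.log (1 + a))) η :=
    hQint.mul_const _
  have i2' : Integrable (fun p : E2 × E2 => a ^ 2 * ‖p.1 - p.2‖ ^ 2) η := hQint.const_mul _
  have i2 : Integrable (fun p : E2 × E2 => c * (1 - a ^ 2 * ‖p.1 - p.2‖ ^ 2)) η :=
    ((integrable_const (1 : ℝ)).sub i2').const_mul c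
  have key : ∫ p : E2 × E2, C₀ * (‖p.1 - p.2‖ ^ 2 * (1 + Real.log (1 + a))
      + c * (1 - a ^ 2 * ‖p.1 - p.2‖ ^ 2)) ∂η = C₀ * Q * (1 + Real.log (1 + a)) := by
    rw [integral_const_mul, integral_add i1 i2, integral_mul_const, integral_const_mul,
      integral_sub (integrable_const _) i2', integral_const_mul, ← hQ, integral_const, hreal, ha2]
    have : M / Q * Q = M := by field_simp
    rw [this]
    simp
    ring
  rw [← key]
  refine abs_integral_le_integral_abs.trans
    (integral_mono hint.abs ((i1.add i2).const_mul C₀) fun p => ?_)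
  have h1 := abs_real_inner_le_norm (p.1 - p.2) (v p.1 - v p.2)
  have h2 := mul_le_mul_of_nonneg_left (hv p.1 p.2) (norm_nonneg (p.1 - p.2))
  have h3 := mul_le_mul_of_nonneg_left (aux_pt ‖p.1 - p.2‖ a (norm_nonneg _) ha) hC
  refine h1.trans (h2.trans (le_trans (le_of_eq ?_) h3))
  ring
end
end

section
/- Let C > 0, let t₁ ≤ T be real numbers, and let Q : [t₁, T] → (0,1) be differentiable with Q'(t) ≤ C Q(t) ( 1 + log(1/Q(t)) ) for all t ∈ [t₁, T]. Then for all t ∈ [t₁, T], Q(t) ≤ e^{1 − exp(−C(t − t₁))} · Q(t₁)^{exp(−C(t − t₁))}; in particular Q(t) ≤ e · Q(t₁)^{exp(−C(t − t₁))}. -/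
open Real

/-- **Osgood-type integration of the differential inequality**: if `Q : [t₁, T] → (0,1)` is
differentiable with `Q' ≤ C Q (1 + log(1/Q))`, then
`Q(t) ≤ e^{1 − exp(−C(t−t₁))} Q(t₁)^{exp(−C(t−t₁))} ≤ e Q(t₁)^{exp(−C(t−t₁))}`. -/
theorem osgood_integration (C : ℝ) (hC : 0 < C) (t₁ T : ℝ) (ht : t₁ ≤ T) (Q : ℝ → ℝ)
    (hQ0 : ∀ t, t₁ ≤ t → t ≤ T → 0 < Q t) (hQ1 : ∀ t, t₁ ≤ t → t ≤ T → Q t < 1)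
    (hdiff : ∀ t, t₁ ≤ t → t ≤ T → DifferentiableAt ℝ Q t)
    (hineq : ∀ t, t₁ ≤ t → t ≤ T → deriv Q t ≤ C * Q t * (1 + Real.log (1 / Q t))) :
    ∀ t, t₁ ≤ t → t ≤ T →
      Q t ≤ Real.exp (1 - Real.exp (-C * (t - t₁))) * Q t₁ ^ Real.exp (-C * (t - t₁)) ∧
      Q t ≤ Real.exp 1 * Q t₁ ^ Real.exp (-C * (t - t₁)) := by
  have hd : ∀ t, t₁ ≤ t → t ≤ T → HasDerivAt (fun s => Real.exp (C * (s - t₁)) * (Real.log (Q s) - 1))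
      (Real.exp (C * (t - t₁)) * C * (Real.log (Q t) - 1)
        + Real.exp (C * (t - t₁)) * (deriv Q t / Q t)) t := by
    intro t h1 h2
    have hl := ((hdiff t h1 h2).hasDerivAt.log (hQ0 t h1 h2).ne').sub_const 1
    have he : HasDerivAt (fun s => Real.exp (C * (s - t₁))) (Real.exp (C * (t - t₁)) * C) t := by
      have h := (((hasDerivAt_id t).sub_const t₁).const_mul C).exp
      simpa using h
    exact he.mul hl
  have hanti : AntitoneOn (fun s => Real.exp (C * (s - t₁)) * (Real.log (Q s) - 1))
      (Set.Icc t₁ T) := by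
    refine antitoneOn_of_hasDerivWithinAt_nonpos (convex_Icc t₁ T)
      (fun x hx => (hd x hx.1 hx.2).continuousAt.continuousWithinAt)
      (fun x hx => (hd x (interior_subset hx).1 (interior_subset hx).2).hasDerivWithinAt) ?_
    intro x hx
    have hx' := interior_subset hx
    have hq := hQ0 x hx'.1 hx'.2
    have h := hineq x hx'.1 hx'.2
    rw [one_div, Real.log_inv] at h
    have h2 : deriv Q x / Q x ≤ C * (1 - Real.log (Q x)) := by
      rw [div_le_iff₀ hq]
      linarith
    have := mul_le_mul_of_nonneg_left h2 (Real.exp_pos (C * (x - t₁))).le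
    linarith
  intro t h1 h2
  have hq := hQ0 t h1 h2
  have hq1 := hQ0 t₁ le_rfl ht
  have h := hanti ⟨le_rfl, ht⟩ ⟨h1, h2⟩ h1
  simp only [sub_self, mul_zero, Real.exp_zero, one_mul] at h
  have hmain : Real.log (Q t) - 1 ≤ Real.exp (-C * (t - t₁)) * (Real.log (Q t₁) - 1) := by
    have h3 := mul_le_mul_of_nonneg_left h (Real.exp_pos (-C * (t - t₁))).le
    rwa [← mul_assoc, ← Real.exp_add, show -C * (t - t₁) + C * (t - t₁) = 0 by ring,
      Real.exp_zero, one_mul] at h3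
  have hfirst : Q t ≤ Real.exp (1 - Real.exp (-C * (t - t₁))) * Q t₁ ^ Real.exp (-C * (t - t₁)) := by
    rw [Real.rpow_def_of_pos hq1, ← Real.exp_add, ← Real.log_le_iff_le_exp hq]
    linarith
  refine ⟨hfirst, hfirst.trans ?_⟩
  refine mul_le_mul_of_nonneg_right ?_ (Real.rpow_nonneg hq1.le _)
  exact Real.exp_le_exp.2 (by linarith [Real.exp_pos (-C * (t - t₁))])
end
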